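/- Let ν ∈ (0,1/2]. The infimum, over all smooth not identically zero functions u : (0,π/2) × ℝ → ℂ that are 2π-periodic in the second variable θ and have finite magnetic energy, of the quotient Q[u] = (∫₀^{2π} ∫₀^{π/2} (|∂_r u(r,θ)|² + |∂_θ u(r,θ) − iν u(r,θ)|²/sin²(r)) sin(r) dr dθ) / (∫₀^{2π} ∫₀^{π/2} |u(r,θ)|² sin(r) dr dθ) equals ν(ν+1), attained by u(r,θ) = (sin r)^ν. -/

import Mathlib

open MeasureTheory Real Set Filter

/-- The integrand of the magnetic energy in geodesic polar coordinates `(r, θ)`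
on the round sphere, for the Aharonov–Bohm potential `A = ν dθ`. -/
noncomputable def magEnergyIntegrand (ν : ℝ) (u : ℝ → ℝ → ℂ) (p : ℝ × ℝ) : ℝ :=
  (‖deriv (fun s => u s p.2) p.1‖ ^ 2
      + ‖deriv (fun t => u p.1 t) p.2 - Complex.I * (ν : ℂ) * u p.1 p.2‖ ^ 2
          / Real.sin p.1 ^ 2)
    * Real.sin p.1

/-- Admissible functions on the polar coordinate rectangle `(0, R) × ℝ`:
smooth, `2π`-periodic in `θ`, not identically zero, with finite magnetic energy
(and finite `L²`-norm). -/
def MagAdmissible (R ν : ℝ) (u : ℝ → ℝ → ℂ) : Prop :=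
  ContDiffOn ℝ (⊤ : ℕ∞) (Function.uncurry u) (Ioo 0 R ×ˢ (univ : Set ℝ)) ∧
  (∀ r θ, u r (θ + 2 * π) = u r θ) ∧
  (¬ ∀ r ∈ Ioo (0:ℝ) R, ∀ θ : ℝ, u r θ = 0) ∧
  IntegrableOn (magEnergyIntegrand ν u) (Ioo 0 R ×ˢ Ioo 0 (2 * π)) ∧
  IntegrableOn (fun p : ℝ × ℝ => ‖u p.1 p.2‖ ^ 2 * Real.sin p.1)
    (Ioo 0 R ×ˢ Ioo 0 (2 * π))

/-- The magnetic Rayleigh quotient in polar coordinates. -/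
noncomputable def magQuot (R ν : ℝ) (u : ℝ → ℝ → ℂ) : ℝ :=
  (∫ p in Ioo (0:ℝ) R ×ˢ Ioo (0:ℝ) (2 * π), magEnergyIntegrand ν u p) /
    ∫ p in Ioo (0:ℝ) R ×ˢ Ioo (0:ℝ) (2 * π), ‖u p.1 p.2‖ ^ 2 * Real.sin p.1

/-!
Let `d` be the distance from the flux `ν` to the nearest integer `k`. Expanding in Fourier modes
`e^{inθ}`, the angular part of the energy dominates `d² |u|² / sin r`, because each `|n - ν|` is at
least `d`. What remains is a radial inequality, which follows from the ground state identity
`sin r |f'|² + d² |f|² / sin r - d (d + 1) sin r |f|²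
  = |sin r f' - d cos r f|² / sin r + (d cos r |f|²)'`.
The boundary term is nonnegative at the outer end, where `cos r ≥ 0`, and it is small along a
sequence `r → 0`, since otherwise `|f|² / sin r` would not be integrable. The square vanishes
exactly for multiples of `(sin r)^d`, so `e^{ikθ} (sin r)^d` is a minimizer.
-/

open scoped Topology

/-! ### The angular inequality -/

section Fourier

variable {a b : ℝ}

lemma fourierCoeffOn_sub (hab : a < b) {f g : ℝ → ℂ} (hf : IntervalIntegrable f volume a b)
    (hg : IntervalIntegrable g volume a b) (n : ℤ) :
    fourierCoeffOn hab (fun x => f x - g x) n =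
      fourierCoeffOn hab f n - fourierCoeffOn hab g n := by
  have hcont : Continuous fun x : ℝ => fourier (-n) (x : AddCircle (b - a)) :=
    (map_continuous (fourier (-n))).comp (AddCircle.continuous_mk' _)
  simp only [fourierCoeffOn_eq_integral, smul_eq_mul, mul_sub]
  rw [intervalIntegral.integral_sub (hf.continuousOn_mul hcont.continuousOn)
    (hg.continuousOn_mul hcont.continuousOn), smul_sub]

lemma fourierCoeffOn_deriv_of_eq_endpoints (hab : a < b) {f f' : ℝ → ℂ}
    (hf : ∀ x ∈ uIcc a b, HasDerivAt f (f' x) x) (hf' : IntervalIntegrable f' volume a b)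
    (hfab : f a = f b) (n : ℤ) :
    fourierCoeffOn hab f' n =
      2 * π * Complex.I * n / (b - a) * fourierCoeffOn hab f n := by
  rcases eq_or_ne n 0 with rfl | hn
  · have hint : ∫ x in a..b, f' x = 0 := by
      rw [intervalIntegral.integral_eq_sub_of_hasDerivAt hf hf', hfab, sub_self]
    simp [fourierCoeffOn_eq_integral, hint]
  · have hn' : (n : ℂ) ≠ 0 := by exact_mod_cast hn
    have hba : (b - a : ℂ) ≠ 0 := by exact_mod_cast (sub_pos.2 hab).ne'
    have hπ : (π : ℂ) ≠ 0 := by exact_mod_cast pi_ne_zero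
    rw [fourierCoeffOn_of_hasDerivAt hab hn hf hf', hfab]
    field_simp [Complex.I_ne_zero]
    ring

lemma integral_norm_sq_le_of_fourierCoeffOn (hab : a < b) {f g : ℝ → ℂ} {C : ℝ}
    (hf : MemLp f 2 (volume.restrict (Ioc a b))) (hg : MemLp g 2 (volume.restrict (Ioc a b)))
    (h : ∀ n, C * ‖fourierCoeffOn hab f n‖ ^ 2 ≤ ‖fourierCoeffOn hab g n‖ ^ 2) :
    C * ∫ x in a..b, ‖f x‖ ^ 2 ≤ ∫ x in a..b, ‖g x‖ ^ 2 := by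
  have hsum := hasSum_le h ((hasSum_sq_fourierCoeffOn hab hf).mul_left C)
    (hasSum_sq_fourierCoeffOn hab hg)
  rw [smul_eq_mul, smul_eq_mul, mul_left_comm] at hsum
  exact le_of_mul_le_mul_left hsum (inv_pos.2 (sub_pos.2 hab))

lemma memLp_restrict_Ioc_of_continuous {E : Type*} [NormedAddCommGroup E] {p : ENNReal} {f : ℝ → E}
    (hf : Continuous f) : MemLp f p (volume.restrict (Ioc a b)) := by
  obtain ⟨C, hC⟩ := isCompact_Icc.exists_bound_of_continuousOn (hf.continuousOn (s := Icc a b))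
  refine MemLp.of_bound hf.aestronglyMeasurable C ?_
  filter_upwards [ae_restrict_mem measurableSet_Ioc] with x hx
  exact hC x (Ioc_subset_Icc_self hx)

lemma sq_mul_integral_norm_sq_le_integral_norm_deriv_sub_sq {c ν : ℝ} (hc : 0 ≤ c)
    (hcν : ∀ n : ℤ, c ≤ |ν - n|) {g : ℝ → ℂ} (hg : ContDiff ℝ 1 g) (hper : g 0 = g (2 * π)) :
    c ^ 2 * ∫ t in 0..2 * π, ‖g t‖ ^ 2 ≤
      ∫ t in 0..2 * π, ‖deriv g t - Complex.I * ν * g t‖ ^ 2 := by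
  have hg' : Continuous (deriv g) := hg.continuous_deriv le_rfl
  have hg_cont : Continuous fun t => Complex.I * ν * g t := continuous_const.mul hg.continuous
  refine integral_norm_sq_le_of_fourierCoeffOn two_pi_pos
    (memLp_restrict_Ioc_of_continuous hg.continuous)
    (memLp_restrict_Ioc_of_continuous (hg'.sub hg_cont)) fun n => ?_
  have hcoeff : fourierCoeffOn two_pi_pos (fun t => deriv g t - Complex.I * ν * g t) n =
      Complex.I * ((n - ν : ℝ) : ℂ) * fourierCoeffOn two_pi_pos g n := by
    have hπ : (π : ℂ) ≠ 0 := by exact_mod_cast pi_ne_zero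
    rw [fourierCoeffOn_sub _ (hg'.intervalIntegrable _ _) (hg_cont.intervalIntegrable _ _),
      fourierCoeffOn.const_mul, fourierCoeffOn_deriv_of_eq_endpoints _
        (fun x _ => (hg.differentiable one_ne_zero x).hasDerivAt) (hg'.intervalIntegrable _ _) hper]
    push_cast
    field_simp
    ring
  rw [hcoeff, norm_mul, norm_mul, Complex.norm_I, one_mul, Complex.norm_real, Real.norm_eq_abs,
    abs_sub_comm, mul_pow]
  gcongr
  exact hcν n

end Fourier

/-! ### The radial inequality -/

lemma frequently_mul_lt_of_integrableAtFilter_nhdsGT {g : ℝ → ℝ}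
    (hg : IntegrableAtFilter g (𝓝[>] 0)) {ε : ℝ} (hε : 0 < ε) :
    ∃ᶠ r in 𝓝[>] 0, r * g r < ε := by
  intro hlarge
  obtain ⟨s, hs, hgs⟩ := hg
  obtain ⟨c, hc0, hc⟩ := mem_nhdsGT_iff_exists_Ioo_subset.1 (inter_mem hs hlarge)
  rw [mem_Ioi] at hc0
  have hinv : IntegrableOn (fun r : ℝ => r⁻¹) (Ioo 0 c) := by
    refine ((hgs.mono_set fun r hr => (hc hr).1).const_mul ε⁻¹).mono'
      measurable_inv.aestronglyMeasurable ?_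
    filter_upwards [ae_restrict_mem measurableSet_Ioo] with r hr
    have hεr : ε ≤ r * g r := not_lt.1 (hc hr).2
    rw [norm_of_nonneg (inv_pos.2 hr.1).le, inv_mul_eq_div, le_div_iff₀ hε, inv_mul_eq_div,
      div_le_iff₀' hr.1]
    exact hεr
  have hnot := intervalIntegrable_inv_iff.1
    ((intervalIntegrable_iff_integrableOn_Ioo_of_le hc0.le).2 hinv)
  exact hnot.elim hc0.ne fun h => h left_mem_uIcc

lemma frequently_norm_sq_lt_of_integrableAtFilter_div_sin {E : Type*} [NormedAddCommGroup E]
    {f : ℝ → E} (hf : IntegrableAtFilter (fun r => ‖f r‖ ^ 2 / sin r) (𝓝[>] 0)) {ε : ℝ}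
    (hε : 0 < ε) : ∃ᶠ r in 𝓝[>] 0, ‖f r‖ ^ 2 < ε := by
  refine ((frequently_mul_lt_of_integrableAtFilter_nhdsGT hf hε).and_eventually
    (Ioo_mem_nhdsGT pi_pos)).mono fun r ⟨hlt, hr⟩ => ?_
  have hsin : 0 < sin r := sin_pos_of_mem_Ioo hr
  calc ‖f r‖ ^ 2 = sin r * (‖f r‖ ^ 2 / sin r) := by field_simp
    _ ≤ r * (‖f r‖ ^ 2 / sin r) := by gcongr; exact sin_le hr.1.le
    _ < ε := hlt

section Primitive

variable {a b : ℝ} {φ : ℝ → ℝ}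

lemma tendsto_intervalIntegral_nhdsLT (hab : a < b) (hφ : IntegrableOn φ (Ioo a b)) :
    Tendsto (fun y => ∫ r in a..y, φ r) (𝓝[<] b) (𝓝 (∫ r in a..b, φ r)) := by
  rw [← integrableOn_Icc_iff_integrableOn_Ioo, ← uIcc_of_le hab.le] at hφ
  refine (intervalIntegral.continuousOn_primitive_interval hφ b right_mem_uIcc).mono_left ?_
  rw [uIcc_of_le hab.le, ← nhdsWithin_Ioo_eq_nhdsLT hab]
  exact nhdsWithin_mono _ Ioo_subset_Icc_self

lemma tendsto_intervalIntegral_nhdsGT (hab : a < b) (hφ : IntegrableOn φ (Ioo a b)) :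
    Tendsto (fun x => ∫ r in x..b, φ r) (𝓝[>] a) (𝓝 (∫ r in a..b, φ r)) := by
  rw [← integrableOn_Icc_iff_integrableOn_Ioo, ← uIcc_of_le hab.le] at hφ
  refine (intervalIntegral.continuousOn_primitive_interval_left hφ a left_mem_uIcc).mono_left ?_
  rw [uIcc_of_le hab.le, ← nhdsWithin_Ioo_eq_nhdsGT hab]
  exact nhdsWithin_mono _ Ioo_subset_Icc_self

lemma integral_nonneg_of_deriv_le_of_frequently_small (hab : a < b) {k k' : ℝ → ℝ}
    (hk : ∀ r ∈ Ioo a b, HasDerivAt k (k' r) r) (hkφ : ∀ r ∈ Ioo a b, k' r ≤ φ r)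
    (hφ : IntegrableOn φ (Ioo a b)) (hk_nonneg : ∀ r ∈ Ioo a b, 0 ≤ k r)
    (hk_small : ∀ ε > 0, ∃ᶠ r in 𝓝[>] a, k r < ε) :
    0 ≤ ∫ r in Ioo a b, φ r := by
  have htail (x : ℝ) (hx : x ∈ Ioo a b) : -k x ≤ ∫ r in x..b, φ r := by
    refine ge_of_tendsto (tendsto_intervalIntegral_nhdsLT hx.2
      (hφ.mono_set (Ioo_subset_Ioo_left hx.1.le))) ?_
    filter_upwards [Ioo_mem_nhdsLT hx.2] with y hy
    have hsub : Icc x y ⊆ Ioo a b := Icc_subset_Ioo hx.1 hy.2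
    have hftc : k y - k x ≤ ∫ r in x..y, φ r :=
      intervalIntegral.sub_le_integral_of_hasDeriv_right_of_le hy.1.le
        (fun r hr => (hk r (hsub hr)).continuousAt.continuousWithinAt)
        (fun r hr => (hk r (hsub (Ioo_subset_Icc_self hr))).hasDerivWithinAt)
        (hφ.mono_set hsub) (fun r hr => hkφ r (hsub (Ioo_subset_Icc_self hr)))
    linarith [hk_nonneg y (hsub (right_mem_Icc.2 hy.1.le))]
  have hlim : Tendsto (fun x => ∫ r in x..b, φ r) (𝓝[>] a) (𝓝 (∫ r in Ioo a b, φ r)) := by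
    rw [← integral_Ioc_eq_integral_Ioo, ← intervalIntegral.integral_of_le hab.le]
    exact tendsto_intervalIntegral_nhdsGT hab hφ
  by_contra! hneg
  obtain ⟨x, hk_lt, hint_lt, hx⟩ := ((hk_small _ (half_pos (neg_pos.2 hneg))).and_eventually
    ((hlim.eventually_lt_const (show _ < (∫ r in Ioo a b, φ r) / 2 by linarith)).and
      (Ioo_mem_nhdsGT hab))).exists
  linarith [htail x hx]

end Primitive

section Radial

variable {E : Type*} [NormedAddCommGroup E] [InnerProductSpace ℝ E]

lemma deriv_cos_mul_norm_sq_le (c : ℝ) (x y : E) {r : ℝ} (hr : 0 < sin r) :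
    c * -sin r * ‖x‖ ^ 2 + c * cos r * (2 * inner ℝ x y) ≤
      ‖y‖ ^ 2 * sin r + c ^ 2 * (‖x‖ ^ 2 / sin r) - c * (c + 1) * (‖x‖ ^ 2 * sin r) := by
  have hsquare : 0 ≤ ‖sin r • y - (c * cos r) • x‖ ^ 2 / sin r := by positivity
  rw [norm_sub_sq_real, norm_smul, norm_smul, mul_pow, mul_pow, Real.norm_eq_abs,
    Real.norm_eq_abs, sq_abs, sq_abs, real_inner_smul_left, real_inner_smul_right,
    real_inner_comm] at hsquare
  rw [← sub_nonneg]
  convert hsquare using 1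
  field_simp
  linear_combination (-c ^ 2 * ‖x‖ ^ 2) * sin_sq_add_cos_sq r

lemma mul_integral_norm_sq_mul_sin_le {R c : ℝ} (hR₀ : 0 < R) (hR : R ≤ π / 2) (hc : 0 < c)
    {f : ℝ → E} (hf : ∀ r ∈ Ioo 0 R, DifferentiableAt ℝ f r)
    (hf' : IntegrableOn (fun r => ‖deriv f r‖ ^ 2 * sin r) (Ioo 0 R))
    (hf_div : IntegrableOn (fun r => ‖f r‖ ^ 2 / sin r) (Ioo 0 R))
    (hf_mul : IntegrableOn (fun r => ‖f r‖ ^ 2 * sin r) (Ioo 0 R)) :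
    c * (c + 1) * ∫ r in Ioo 0 R, ‖f r‖ ^ 2 * sin r ≤
      (∫ r in Ioo 0 R, ‖deriv f r‖ ^ 2 * sin r) +
        c ^ 2 * ∫ r in Ioo 0 R, ‖f r‖ ^ 2 / sin r := by
  have hsin (r : ℝ) (hr : r ∈ Ioo 0 R) : 0 < sin r :=
    sin_pos_of_pos_of_lt_pi hr.1 (by linarith [hr.2, pi_pos])
  have hcos (r : ℝ) (hr : r ∈ Ioo 0 R) : 0 ≤ cos r :=
    cos_nonneg_of_mem_Icc ⟨by linarith [hr.1, pi_pos], by linarith [hr.2]⟩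
  have hsum := hf'.add (hf_div.const_mul (c ^ 2))
  have hsmall (ε : ℝ) (hε : 0 < ε) : ∃ᶠ r in 𝓝[>] 0, c * cos r * ‖f r‖ ^ 2 < ε := by
    refine (frequently_norm_sq_lt_of_integrableAtFilter_div_sin
      ⟨_, Ioo_mem_nhdsGT hR₀, hf_div⟩ (div_pos hε hc)).mono fun r hlt => ?_
    calc c * cos r * ‖f r‖ ^ 2 ≤ c * 1 * ‖f r‖ ^ 2 := by gcongr; exact cos_le_one r
      _ = c * ‖f r‖ ^ 2 := by rw [mul_one]
      _ < ε := (lt_div_iff₀' hc).1 hlt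
  have hnonneg := integral_nonneg_of_deriv_le_of_frequently_small hR₀
    (fun r hr => ((hasDerivAt_cos r).const_mul c).mul (hf r hr).hasDerivAt.norm_sq)
    (fun r hr => deriv_cos_mul_norm_sq_le c (f r) (deriv f r) (hsin r hr))
    (hsum.sub (hf_mul.const_mul _))
    (fun r hr => mul_nonneg (mul_nonneg hc.le (hcos r hr)) (sq_nonneg _)) hsmall
  rw [integral_sub (by exact hsum) (hf_mul.const_mul _), integral_add hf' (hf_div.const_mul _),
    integral_const_mul, integral_const_mul] at hnonneg
  linarith

end Radial

/-! ### Partial derivatives and slices -/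

section Slices

variable {E F G : Type*} [NormedAddCommGroup E] [NormedSpace ℝ E]
  [NormedAddCommGroup F] [NormedSpace ℝ F] [NormedAddCommGroup G] [NormedSpace ℝ G]

lemma continuousOn_deriv_fst {u : ℝ → E → F} {s : Set (ℝ × E)} (hs : IsOpen s)
    (hu : ContDiffOn ℝ 1 (Function.uncurry u) s) :
    ContinuousOn (fun p : ℝ × E => deriv (fun r => u r p.2) p.1) s := by
  refine ((hu.continuousOn_fderiv_of_isOpen hs le_rfl).clm_apply
    (continuousOn_const (c := ((1, 0) : ℝ × E)))).congr fun p hp => ?_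
  have hdiff := (hu.differentiableOn one_ne_zero p hp).differentiableAt (hs.mem_nhds hp)
  exact (hdiff.hasFDerivAt.comp_hasDerivAt p.1 (f := fun r => (r, p.2))
    ((hasDerivAt_id p.1).prodMk (hasDerivAt_const p.1 p.2))).deriv

lemma contDiff_of_contDiffOn_prod_univ {u : E → F → G} {s : Set E} {n : WithTop ℕ∞}
    (hu : ContDiffOn ℝ n (Function.uncurry u) (s ×ˢ univ)) {x : E} (hx : x ∈ s) :
    ContDiff ℝ n (u x) :=
  contDiffOn_univ.1 <| hu.comp (f := fun y => (x, y)) (by fun_prop) fun _ _ => ⟨hx, mem_univ _⟩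

end Slices

/-! ### Energy densities in polar coordinates -/

/-- The coordinate measure `dr dθ` on the polar rectangle `(0, R) × (0, 2π)`, as a product measure
so that Fubini's theorem applies. The factor `sin r` of the area form is part of the densities
below. -/
noncomputable abbrev polarMeasure (R : ℝ) : Measure (ℝ × ℝ) :=
  (volume.restrict (Ioo 0 R)).prod (volume.restrict (Ioo 0 (2 * π)))

/-- The radial part `|∂_r u|² sin r` of the magnetic energy density. -/
noncomputable def radialDensity (u : ℝ → ℝ → ℂ) (p : ℝ × ℝ) : ℝ :=
  ‖deriv (fun r => u r p.2) p.1‖ ^ 2 * sin p.1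

/-- The angular part `|∂_θ u - iνu|² / sin r` of the magnetic energy density. -/
noncomputable def angularDensity (ν : ℝ) (u : ℝ → ℝ → ℂ) (p : ℝ × ℝ) : ℝ :=
  ‖deriv (u p.1) p.2 - Complex.I * ν * u p.1 p.2‖ ^ 2 / sin p.1

/-- The density `|u|² / sin r` of the centrifugal potential, which mediates between the angular and
the radial inequality. -/
noncomputable def centrifugalDensity (u : ℝ → ℝ → ℂ) (p : ℝ × ℝ) : ℝ :=
  ‖u p.1 p.2‖ ^ 2 / sin p.1

/-- The density `|u|² sin r` of the squared `L²` norm on the sphere. -/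
noncomputable def massDensity (u : ℝ → ℝ → ℂ) (p : ℝ × ℝ) : ℝ :=
  ‖u p.1 p.2‖ ^ 2 * sin p.1

lemma volume_restrict_polarRect (R : ℝ) :
    (volume : Measure (ℝ × ℝ)).restrict (Ioo 0 R ×ˢ Ioo 0 (2 * π)) = polarMeasure R := by
  rw [polarMeasure, Measure.prod_restrict, Measure.volume_eq_prod]

lemma ae_polarMeasure_mem (R : ℝ) :
    ∀ᵐ p ∂polarMeasure R, p ∈ Ioo 0 R ×ˢ Ioo 0 (2 * π) := by
  rw [← volume_restrict_polarRect]
  exact ae_restrict_mem (measurableSet_Ioo.prod measurableSet_Ioo)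

lemma aestronglyMeasurable_polarMeasure_of_continuousOn {R : ℝ} {f : ℝ × ℝ → ℝ}
    (hf : ContinuousOn f (Ioo 0 R ×ˢ univ)) : AEStronglyMeasurable f (polarMeasure R) := by
  rw [← volume_restrict_polarRect]
  exact (hf.mono (prod_mono_right (subset_univ _))).aestronglyMeasurable
    (measurableSet_Ioo.prod measurableSet_Ioo)

section Densities

variable {R ν c : ℝ} {u : ℝ → ℝ → ℂ}

lemma magEnergyIntegrand_eq_add (ν : ℝ) (u : ℝ → ℝ → ℂ) :
    magEnergyIntegrand ν u = radialDensity u + angularDensity ν u := by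
  ext p
  simp only [magEnergyIntegrand, radialDensity, angularDensity, Pi.add_apply, add_mul]
  congr 1
  rcases eq_or_ne (sin p.1) 0 with h | h
  · simp [h]
  · field_simp

lemma magQuot_eq (R ν : ℝ) (u : ℝ → ℝ → ℂ) :
    magQuot R ν u = (∫ p, magEnergyIntegrand ν u p ∂polarMeasure R) /
      ∫ p, massDensity u p ∂polarMeasure R := by
  rw [magQuot, volume_restrict_polarRect]
  rfl

lemma sin_pos_of_mem_Ioo_of_le_pi (hR : R ≤ π) {r : ℝ} (hr : r ∈ Ioo 0 R) : 0 < sin r :=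
  sin_pos_of_mem_Ioo ⟨hr.1, hr.2.trans_le hR⟩

lemma radialDensity_nonneg_ae (hR : R ≤ π) : 0 ≤ᵐ[polarMeasure R] radialDensity u := by
  filter_upwards [ae_polarMeasure_mem R] with p hp
  exact mul_nonneg (sq_nonneg _) (sin_pos_of_mem_Ioo_of_le_pi hR hp.1).le

lemma angularDensity_nonneg_ae (hR : R ≤ π) : 0 ≤ᵐ[polarMeasure R] angularDensity ν u := by
  filter_upwards [ae_polarMeasure_mem R] with p hp
  exact div_nonneg (sq_nonneg _) (sin_pos_of_mem_Ioo_of_le_pi hR hp.1).le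

lemma massDensity_nonneg_ae (hR : R ≤ π) : 0 ≤ᵐ[polarMeasure R] massDensity u := by
  filter_upwards [ae_polarMeasure_mem R] with p hp
  exact mul_nonneg (sq_nonneg _) (sin_pos_of_mem_Ioo_of_le_pi hR hp.1).le

lemma integrable_magEnergyIntegrand_iff (hR : R ≤ π)
    (hu : ContDiffOn ℝ 1 (Function.uncurry u) (Ioo 0 R ×ˢ univ)) :
    Integrable (magEnergyIntegrand ν u) (polarMeasure R) ↔
      Integrable (radialDensity u) (polarMeasure R) ∧
        Integrable (angularDensity ν u) (polarMeasure R) := by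
  rw [magEnergyIntegrand_eq_add]
  refine integrable_add_iff_of_nonneg (aestronglyMeasurable_polarMeasure_of_continuousOn ?_)
    (radialDensity_nonneg_ae hR) (angularDensity_nonneg_ae hR)
  exact ((continuousOn_deriv_fst (isOpen_Ioo.prod isOpen_univ) hu).norm.pow 2).mul (by fun_prop)

lemma sq_mul_integral_centrifugalDensity_slice_le (hR : R ≤ π) (hc : 0 ≤ c)
    (hcν : ∀ n : ℤ, c ≤ |ν - n|) (hu : ContDiffOn ℝ 1 (Function.uncurry u) (Ioo 0 R ×ˢ univ))
    (hper : ∀ r, Function.Periodic (u r) (2 * π)) {r : ℝ} (hr : r ∈ Ioo 0 R) :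
    c ^ 2 * ∫ t in Ioo 0 (2 * π), centrifugalDensity u (r, t) ≤
      ∫ t in Ioo 0 (2 * π), angularDensity ν u (r, t) := by
  have hmain := sq_mul_integral_norm_sq_le_integral_norm_deriv_sub_sq hc hcν
    (contDiff_of_contDiffOn_prod_univ hu hr) (hper r).eq.symm
  simp only [intervalIntegral.integral_of_le two_pi_pos.le, integral_Ioc_eq_integral_Ioo] at hmain
  simp only [centrifugalDensity, angularDensity, integral_div, ← mul_div_assoc]
  exact div_le_div_of_nonneg_right hmain (sin_pos_of_mem_Ioo_of_le_pi hR hr).le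

lemma integrable_centrifugalDensity (hR : R ≤ π) (hc : 0 < c) (hcν : ∀ n : ℤ, c ≤ |ν - n|)
    (hu : ContDiffOn ℝ 1 (Function.uncurry u) (Ioo 0 R ×ˢ univ))
    (hper : ∀ r, Function.Periodic (u r) (2 * π))
    (hang : Integrable (angularDensity ν u) (polarMeasure R)) :
    Integrable (centrifugalDensity u) (polarMeasure R) := by
  have hmeas : AEStronglyMeasurable (centrifugalDensity u) (polarMeasure R) :=
    aestronglyMeasurable_polarMeasure_of_continuousOn <| (hu.continuousOn.norm.pow 2).div
      (by fun_prop) fun p hp => (sin_pos_of_mem_Ioo_of_le_pi hR hp.1).ne'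
  refine (integrable_prod_iff hmeas).2 ⟨?_, ?_⟩
  · filter_upwards [ae_restrict_mem measurableSet_Ioo] with r hr
    have hcont_u : Continuous (u r) := (contDiff_of_contDiffOn_prod_univ hu hr).continuous
    have hcont : Continuous fun t => centrifugalDensity u (r, t) :=
      (hcont_u.norm.pow 2).div_const (sin r)
    exact hcont.integrableOn_Icc.mono_set Ioo_subset_Icc_self
  · refine (hang.integral_prod_left.const_mul (c ^ 2)⁻¹).mono' hmeas.norm.integral_prod_right' ?_
    filter_upwards [ae_restrict_mem measurableSet_Ioo] with r hr
    have hnonneg (t : ℝ) : 0 ≤ centrifugalDensity u (r, t) :=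
      div_nonneg (sq_nonneg _) (sin_pos_of_mem_Ioo_of_le_pi hR hr).le
    simp only [norm_of_nonneg (hnonneg _), norm_of_nonneg (integral_nonneg hnonneg)]
    rw [inv_mul_eq_div, le_div_iff₀' (pow_pos hc 2)]
    exact sq_mul_integral_centrifugalDensity_slice_le hR hc.le hcν hu hper hr

lemma sq_mul_integral_centrifugalDensity_le (hR : R ≤ π) (hc : 0 ≤ c)
    (hcν : ∀ n : ℤ, c ≤ |ν - n|) (hu : ContDiffOn ℝ 1 (Function.uncurry u) (Ioo 0 R ×ˢ univ))
    (hper : ∀ r, Function.Periodic (u r) (2 * π))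
    (hcent : Integrable (centrifugalDensity u) (polarMeasure R))
    (hang : Integrable (angularDensity ν u) (polarMeasure R)) :
    c ^ 2 * ∫ p, centrifugalDensity u p ∂polarMeasure R ≤
      ∫ p, angularDensity ν u p ∂polarMeasure R := by
  rw [integral_prod _ hcent, integral_prod _ hang, ← integral_const_mul]
  refine integral_mono_ae (hcent.integral_prod_left.const_mul _) hang.integral_prod_left ?_
  filter_upwards [ae_restrict_mem measurableSet_Ioo] with r hr
  exact sq_mul_integral_centrifugalDensity_slice_le hR hc hcν hu hper hr

lemma mul_integral_massDensity_le (hR₀ : 0 < R) (hR : R ≤ π / 2) (hc : 0 < c)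
    (hu : ContDiffOn ℝ 1 (Function.uncurry u) (Ioo 0 R ×ˢ univ))
    (hrad : Integrable (radialDensity u) (polarMeasure R))
    (hcent : Integrable (centrifugalDensity u) (polarMeasure R))
    (hmass : Integrable (massDensity u) (polarMeasure R)) :
    c * (c + 1) * ∫ p, massDensity u p ∂polarMeasure R ≤
      (∫ p, radialDensity u p ∂polarMeasure R) +
        c ^ 2 * ∫ p, centrifugalDensity u p ∂polarMeasure R := by
  rw [integral_prod_symm _ hcent, integral_prod_symm _ hrad, integral_prod_symm _ hmass,
    ← integral_const_mul, ← integral_const_mul,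
    ← integral_add hrad.integral_prod_right (hcent.integral_prod_right.const_mul _)]
  refine integral_mono_ae (hmass.integral_prod_right.const_mul _)
    (hrad.integral_prod_right.add (hcent.integral_prod_right.const_mul _)) ?_
  filter_upwards [hrad.prod_left_ae, hcent.prod_left_ae, hmass.prod_left_ae]
    with t hrad_t hcent_t hmass_t
  refine mul_integral_norm_sq_mul_sin_le hR₀ hR hc (fun r hr => ?_) hrad_t hcent_t hmass_t
  have hdiff : DifferentiableAt ℝ (Function.uncurry u) (r, t) :=
    (hu.differentiableOn one_ne_zero).differentiableAt
      ((isOpen_Ioo.prod isOpen_univ).mem_nhds ⟨hr, mem_univ t⟩)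
  exact hdiff.comp r (f := fun s => (s, t)) (by fun_prop)

end Densities

/-! ### The lower bound -/

lemma exists_mem_Ioo_ne_zero_of_periodic {E : Type*} [TopologicalSpace E] [T2Space E] [Zero E]
    {g : ℝ → E} {T : ℝ} (hT : 0 < T) (hg : Continuous g) (hper : Function.Periodic g T) {t : ℝ}
    (ht : g t ≠ 0) : ∃ s ∈ Ioo 0 T, g s ≠ 0 := by
  by_contra! hzero
  have hclosure : EqOn g (fun _ => 0) (Icc 0 T) := by
    rw [← closure_Ioo hT.ne]
    exact EqOn.closure hzero hg continuous_const
  obtain ⟨s, hs, hst⟩ := hper.exists_mem_Ico₀ hT t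
  exact ht (hst.trans (hclosure (Ico_subset_Icc_self hs)))

lemma setIntegral_pos_of_continuousOn_of_ne_zero {X : Type*} [TopologicalSpace X]
    [MeasurableSpace X] [OpensMeasurableSpace X] {μ : Measure X} [μ.IsOpenPosMeasure] {s : Set X}
    (hs : IsOpen s) {f : X → ℝ} (hf : ContinuousOn f s) (hint : IntegrableOn f s μ)
    (hnonneg : 0 ≤ᵐ[μ.restrict s] f) {x : X} (hx : x ∈ s) (hfx : f x ≠ 0) :
    0 < ∫ y in s, f y ∂μ := by
  refine (integral_nonneg_of_ae hnonneg).lt_of_ne' fun hzero => hfx ?_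
  exact Measure.eqOn_open_of_ae_eq ((setIntegral_eq_zero_iff_of_nonneg_ae hnonneg hint).1 hzero)
    hs hf continuousOn_const hx

namespace MagAdmissible

variable {R ν c : ℝ} {u : ℝ → ℝ → ℂ}

lemma contDiffOn_one (hu : MagAdmissible R ν u) :
    ContDiffOn ℝ 1 (Function.uncurry u) (Ioo 0 R ×ˢ univ) :=
  hu.1.of_le (by exact_mod_cast le_top)

lemma periodic (hu : MagAdmissible R ν u) (r : ℝ) : Function.Periodic (u r) (2 * π) :=
  hu.2.1 r

lemma integrable_magEnergyIntegrand (hu : MagAdmissible R ν u) :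
    Integrable (magEnergyIntegrand ν u) (polarMeasure R) := by
  rw [← volume_restrict_polarRect]
  exact hu.2.2.2.1

lemma integrable_massDensity (hu : MagAdmissible R ν u) :
    Integrable (massDensity u) (polarMeasure R) := by
  rw [← volume_restrict_polarRect]
  exact hu.2.2.2.2

lemma exists_ne_zero (hu : MagAdmissible R ν u) : ∃ r ∈ Ioo 0 R, ∃ t, u r t ≠ 0 := by
  simpa only [not_forall, exists_prop] using hu.2.2.1

lemma integral_massDensity_pos (hR : R ≤ π) (hu : MagAdmissible R ν u) :
    0 < ∫ p, massDensity u p ∂polarMeasure R := by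
  obtain ⟨r, hr, t, ht⟩ := hu.exists_ne_zero
  obtain ⟨s, hs, hus⟩ := exists_mem_Ioo_ne_zero_of_periodic two_pi_pos
    (contDiff_of_contDiffOn_prod_univ hu.contDiffOn_one hr).continuous (hu.periodic r) ht
  have hint := hu.integrable_massDensity
  have hnonneg := massDensity_nonneg_ae (u := u) hR
  have hcont : ContinuousOn (massDensity u) (Ioo 0 R ×ˢ univ) :=
    (hu.contDiffOn_one.continuousOn.norm.pow 2).mul (by fun_prop)
  rw [← volume_restrict_polarRect] at hint hnonneg ⊢
  exact setIntegral_pos_of_continuousOn_of_ne_zero (isOpen_Ioo.prod isOpen_Ioo)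
    (hcont.mono (prod_mono_right (subset_univ _))) hint hnonneg (x := (r, s)) ⟨hr, hs⟩
    (mul_ne_zero (pow_ne_zero 2 (norm_ne_zero_iff.2 hus)) (sin_pos_of_mem_Ioo_of_le_pi hR hr).ne')

lemma magQuot_nonneg (hR : R ≤ π) (hu : MagAdmissible R ν u) : 0 ≤ magQuot R ν u := by
  rw [magQuot_eq, magEnergyIntegrand_eq_add]
  refine div_nonneg (integral_nonneg_of_ae ?_) (hu.integral_massDensity_pos hR).le
  filter_upwards [radialDensity_nonneg_ae hR, angularDensity_nonneg_ae hR] with p hrad hang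
  exact add_nonneg hrad hang

theorem mul_add_one_le_magQuot (hR : R ≤ π / 2) (hc : 0 ≤ c) (hcν : ∀ n : ℤ, c ≤ |ν - n|)
    (hu : MagAdmissible R ν u) : c * (c + 1) ≤ magQuot R ν u := by
  have hRπ : R ≤ π := hR.trans (half_le_self pi_pos.le)
  rcases hc.eq_or_lt with rfl | hc_pos
  · simpa only [zero_mul] using hu.magQuot_nonneg hRπ
  obtain ⟨r, hr, -⟩ := hu.exists_ne_zero
  have hu₁ := hu.contDiffOn_one
  obtain ⟨hrad, hang⟩ := (integrable_magEnergyIntegrand_iff hRπ hu₁).1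
    hu.integrable_magEnergyIntegrand
  have hcent := integrable_centrifugalDensity hRπ hc_pos hcν hu₁ hu.periodic hang
  rw [magQuot_eq, le_div_iff₀ (hu.integral_massDensity_pos hRπ), magEnergyIntegrand_eq_add]
  calc c * (c + 1) * ∫ p, massDensity u p ∂polarMeasure R
      ≤ (∫ p, radialDensity u p ∂polarMeasure R) +
          c ^ 2 * ∫ p, centrifugalDensity u p ∂polarMeasure R :=
        mul_integral_massDensity_le (hr.1.trans hr.2) hR hc_pos hu₁ hrad hcent
          hu.integrable_massDensity
    _ ≤ (∫ p, radialDensity u p ∂polarMeasure R) + ∫ p, angularDensity ν u p ∂polarMeasure R := by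
        gcongr
        exact sq_mul_integral_centrifugalDensity_le hRπ hc hcν hu₁ hu.periodic hcent hang
    _ = ∫ p, (radialDensity u + angularDensity ν u) p ∂polarMeasure R :=
        (integral_add hrad hang).symm

end MagAdmissible

/-! ### The ground state -/

/-- The function `e^{ikθ} (sin r)^d`, which minimizes the magnetic Rayleigh quotient of the
hemisphere when `k` is an integer nearest to the flux and `d` is its distance to the flux. -/
noncomputable def groundState (k : ℤ) (d : ℝ) (r θ : ℝ) : ℂ :=
  Complex.exp (k * θ * Complex.I) * (sin r ^ d : ℝ)

lemma intervalIntegrable_sin_rpow {a R : ℝ} (ha : -1 < a) (hR₀ : 0 ≤ R) (hR : R < π) :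
    IntervalIntegrable (fun r => sin r ^ a) volume 0 R := by
  have hsinc_pos (r : ℝ) (hr : r ∈ uIcc 0 R) : 0 < sinc r := by
    rw [uIcc_of_le hR₀] at hr
    rcases hr.1.eq_or_lt with rfl | hr₀
    · simp
    · rw [sinc_of_ne_zero hr₀.ne']
      exact div_pos (sin_pos_of_pos_of_lt_pi hr₀ (hr.2.trans_lt hR)) hr₀
  have hsinc : ContinuousOn (fun r => sinc r ^ a) (uIcc 0 R) :=
    continuous_sinc.continuousOn.rpow_const fun r hr => Or.inl (hsinc_pos r hr).ne'
  refine ((intervalIntegral.intervalIntegrable_rpow' ha).mul_continuousOn hsinc).congr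
    fun r hr => ?_
  rw [uIoc_of_le hR₀] at hr
  have hr' : r ∈ uIcc 0 R := Ioc_subset_Icc_self.trans Icc_subset_uIcc hr
  rw [← mul_rpow hr.1.le (hsinc_pos r hr').le, sinc_of_ne_zero hr.1.ne', mul_div_cancel₀ _ hr.1.ne']

lemma hasDerivAt_sin_rpow (d : ℝ) {r : ℝ} (hr : sin r ≠ 0) :
    HasDerivAt (fun s => sin s ^ d) (d * cos r * sin r ^ (d - 1)) r :=
  ((hasDerivAt_sin r).rpow_const (Or.inl hr)).congr_deriv (by ring)

lemma norm_exp_intCast_mul_ofReal_mul_I (k : ℤ) (θ : ℝ) :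
    ‖Complex.exp (k * θ * Complex.I)‖ = 1 := by
  exact_mod_cast Complex.norm_exp_ofReal_mul_I (k * θ)

section GroundState

variable {k : ℤ} {d ν : ℝ}

lemma groundState_zero (d : ℝ) : groundState 0 d = fun r _ => ((sin r ^ d : ℝ) : ℂ) := by
  ext r θ
  simp [groundState]

lemma norm_groundState {r : ℝ} (hr : 0 ≤ sin r) (θ : ℝ) : ‖groundState k d r θ‖ = sin r ^ d := by
  rw [groundState, norm_mul, norm_exp_intCast_mul_ofReal_mul_I, one_mul, Complex.norm_real,
    norm_of_nonneg (rpow_nonneg hr _)]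

lemma norm_deriv_groundState_fst {r : ℝ} (hr : 0 < sin r) (θ : ℝ) :
    ‖deriv (fun s => groundState k d s θ) r‖ = |d * cos r| * sin r ^ (d - 1) := by
  have hderiv := ((hasDerivAt_sin_rpow d hr.ne').ofReal_comp).const_mul
    (Complex.exp (k * θ * Complex.I))
  rw [show deriv (fun s => groundState k d s θ) r = _ from hderiv.deriv, norm_mul,
    norm_exp_intCast_mul_ofReal_mul_I, one_mul, Complex.norm_real, norm_mul, Real.norm_eq_abs,
    norm_of_nonneg (rpow_nonneg hr.le _)]

lemma hasDerivAt_groundState_snd (k : ℤ) (d r θ : ℝ) :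
    HasDerivAt (groundState k d r) (Complex.I * k * groundState k d r θ) θ := by
  have hphase : HasDerivAt (fun t : ℝ => (k * t * Complex.I : ℂ)) (k * Complex.I) θ := by
    simpa using ((hasDerivAt_id θ).ofReal_comp.const_mul (k : ℂ)).mul_const Complex.I
  refine (hphase.cexp.mul_const _).congr_deriv ?_
  rw [groundState]
  ring

lemma magEnergyIntegrand_groundState (hd : |ν - k| = d) {p : ℝ × ℝ} (hp : 0 < sin p.1) :
    magEnergyIntegrand ν (groundState k d) p =
      d ^ 2 * (cos p.1 ^ 2 + 1) * sin p.1 ^ (2 * d - 1) := by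
  have hangular : ‖deriv (groundState k d p.1) p.2 - Complex.I * ν * groundState k d p.1 p.2‖ =
      d * sin p.1 ^ d := by
    rw [(hasDerivAt_groundState_snd k d p.1 p.2).deriv, ← sub_mul, ← mul_sub, norm_mul, norm_mul,
      Complex.norm_I, one_mul, norm_groundState hp.le, ← hd, abs_sub_comm]
    exact_mod_cast rfl
  have hpow : sin p.1 ^ (2 * d - 1) = (sin p.1 ^ d) ^ 2 / sin p.1 := by
    rw [rpow_sub_one hp.ne', mul_comm, rpow_mul hp.le, rpow_two]
  simp only [magEnergyIntegrand, norm_deriv_groundState_fst hp, hangular, mul_pow, sq_abs, hpow,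
    rpow_sub_one hp.ne']
  field_simp

lemma massDensity_groundState {p : ℝ × ℝ} (hp : 0 < sin p.1) :
    massDensity (groundState k d) p = sin p.1 ^ (2 * d + 1) := by
  rw [massDensity, norm_groundState hp.le, rpow_add_one hp.ne', mul_comm 2 d, rpow_mul hp.le,
    rpow_two]

lemma intervalIntegrable_groundState_energy (hd : 0 ≤ d) :
    IntervalIntegrable (fun r => d ^ 2 * (cos r ^ 2 + 1) * sin r ^ (2 * d - 1)) volume
      0 (π / 2) := by
  rcases hd.eq_or_lt with rfl | hd
  · simp
  · exact (intervalIntegrable_sin_rpow (by linarith) pi_div_two_pos.le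
      (half_lt_self pi_pos)).continuousOn_mul (by fun_prop)

lemma intervalIntegrable_groundState_mass (hd : 0 ≤ d) :
    IntervalIntegrable (fun r => sin r ^ (2 * d + 1)) volume 0 (π / 2) :=
  intervalIntegrable_sin_rpow (by linarith) pi_div_two_pos.le (half_lt_self pi_pos)

lemma integral_groundState_energy (hd : 0 ≤ d) :
    ∫ r in 0..π / 2, d ^ 2 * (cos r ^ 2 + 1) * sin r ^ (2 * d - 1) =
      d * (d + 1) * ∫ r in 0..π / 2, sin r ^ (2 * d + 1) := by
  have henergy := intervalIntegrable_groundState_energy hd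
  have hmass := (intervalIntegrable_groundState_mass hd).const_mul (d * (d + 1))
  have hboundary : d * cos 0 * sin 0 ^ (2 * d) = 0 := by
    rcases hd.eq_or_lt with rfl | hd
    · simp
    · rw [sin_zero, zero_rpow (by positivity), mul_zero]
  have hftc := intervalIntegral.integral_eq_sub_of_hasDerivAt_of_le
    (f := fun r => d * cos r * sin r ^ (2 * d)) pi_div_two_pos.le
    (((continuous_const.mul continuous_cos).mul
      (continuous_sin.rpow_const fun _ => Or.inr (by positivity))).continuousOn)
    (fun r hr => ?_) (henergy.sub hmass)
  · rw [intervalIntegral.integral_sub henergy hmass, intervalIntegral.integral_const_mul,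
      cos_pi_div_two, hboundary] at hftc
    linarith
  · have hsin : 0 < sin r := sin_pos_of_mem_Ioo_of_le_pi (half_le_self pi_pos.le) hr
    refine (((hasDerivAt_cos r).const_mul d).mul
      (hasDerivAt_sin_rpow (2 * d) hsin.ne')).congr_deriv ?_
    rw [rpow_add_one hsin.ne', rpow_sub_one hsin.ne']
    field_simp
    linear_combination d ^ 2 * sin_sq_add_cos_sq r

lemma ae_sin_fst_pos : ∀ᵐ p ∂polarMeasure (π / 2), 0 < sin p.1 := by
  filter_upwards [ae_polarMeasure_mem (π / 2)] with p hp
  exact sin_pos_of_mem_Ioo_of_le_pi (half_le_self pi_pos.le) hp.1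

lemma magEnergyIntegrand_groundState_ae_eq (hd : |ν - k| = d) :
    magEnergyIntegrand ν (groundState k d) =ᵐ[polarMeasure (π / 2)]
      fun p => d ^ 2 * (cos p.1 ^ 2 + 1) * sin p.1 ^ (2 * d - 1) :=
  ae_sin_fst_pos.mono fun _ => magEnergyIntegrand_groundState hd

lemma massDensity_groundState_ae_eq :
    massDensity (groundState k d) =ᵐ[polarMeasure (π / 2)] fun p => sin p.1 ^ (2 * d + 1) :=
  ae_sin_fst_pos.mono fun _ => massDensity_groundState

lemma contDiffOn_groundState {n : WithTop ℕ∞} {s : Set (ℝ × ℝ)} (hs : ∀ p ∈ s, sin p.1 ≠ 0) :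
    ContDiffOn ℝ n (Function.uncurry (groundState k d)) s := by
  have hphase : ContDiff ℝ n fun p : ℝ × ℝ => Complex.exp (k * p.2 * Complex.I) :=
    ((contDiff_const.mul (Complex.ofRealCLM.contDiff.comp contDiff_snd)).mul contDiff_const).cexp
  have hmodulus : ContDiffOn ℝ n (fun p : ℝ × ℝ => sin p.1 ^ d) s :=
    (contDiff_sin.comp contDiff_fst).contDiffOn.rpow_const_of_ne hs
  exact hphase.contDiffOn.mul (Complex.ofRealCLM.contDiff.comp_contDiffOn hmodulus)

lemma groundState_periodic (k : ℤ) (d r : ℝ) : Function.Periodic (groundState k d r) (2 * π) := by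
  intro θ
  have hphase : (k * ((θ + 2 * π : ℝ) : ℂ) * Complex.I : ℂ) =
      k * θ * Complex.I + k * (2 * π * Complex.I) := by
    push_cast
    ring
  rw [groundState, groundState, hphase, Complex.exp_periodic.int_mul k]

lemma integrable_polarMeasure_comp_fst {R : ℝ} (hR : 0 ≤ R) {f : ℝ → ℝ}
    (hf : IntervalIntegrable f volume 0 R) :
    Integrable (fun p : ℝ × ℝ => f p.1) (polarMeasure R) :=
  Integrable.comp_fst ((intervalIntegrable_iff_integrableOn_Ioo_of_le hR).1 hf) _

lemma integral_polarMeasure_comp_fst {R : ℝ} (hR : 0 ≤ R) (f : ℝ → ℝ) :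
    ∫ p, f p.1 ∂polarMeasure R = 2 * π * ∫ r in 0..R, f r := by
  rw [integral_fun_fst, intervalIntegral.integral_of_le hR, integral_Ioc_eq_integral_Ioo]
  simp [pi_pos.le]

lemma magAdmissible_groundState (hd : |ν - k| = d) :
    MagAdmissible (π / 2) ν (groundState k d) := by
  have hd₀ : 0 ≤ d := hd ▸ abs_nonneg _
  have hsin (r : ℝ) (hr : r ∈ Ioo 0 (π / 2)) : 0 < sin r :=
    sin_pos_of_mem_Ioo_of_le_pi (half_le_self pi_pos.le) hr
  refine ⟨contDiffOn_groundState fun p hp => (hsin _ hp.1).ne', groundState_periodic k d,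
    fun hzero => ?_, ?_, ?_⟩
  · have hmem : π / 4 ∈ Ioo 0 (π / 2) := ⟨by positivity, by linarith [pi_pos]⟩
    have hnorm := norm_groundState (k := k) (d := d) (hsin _ hmem).le 0
    rw [hzero _ hmem, norm_zero] at hnorm
    exact (rpow_pos_of_pos (hsin _ hmem) d).ne hnorm
  · rw [IntegrableOn, volume_restrict_polarRect,
      integrable_congr (magEnergyIntegrand_groundState_ae_eq hd)]
    exact integrable_polarMeasure_comp_fst pi_div_two_pos.le
      (intervalIntegrable_groundState_energy hd₀)
  · rw [IntegrableOn, volume_restrict_polarRect]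
    refine (integrable_congr massDensity_groundState_ae_eq).2 ?_
    exact integrable_polarMeasure_comp_fst pi_div_two_pos.le
      (intervalIntegrable_groundState_mass hd₀)

theorem magQuot_groundState (hd : |ν - k| = d) :
    magQuot (π / 2) ν (groundState k d) = d * (d + 1) := by
  have hmass := (magAdmissible_groundState hd).integral_massDensity_pos (half_le_self pi_pos.le)
  rw [magQuot_eq, div_eq_iff hmass.ne', integral_congr_ae (magEnergyIntegrand_groundState_ae_eq hd),
    integral_congr_ae massDensity_groundState_ae_eq,
    integral_polarMeasure_comp_fst pi_div_two_pos.le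
      (fun r => d ^ 2 * (cos r ^ 2 + 1) * sin r ^ (2 * d - 1)),
    integral_polarMeasure_comp_fst pi_div_two_pos.le (fun r => sin r ^ (2 * d + 1)),
    integral_groundState_energy (hd ▸ abs_nonneg _)]
  ring

end GroundState

lemma abs_sub_intCast_le_of_le_half {ν : ℝ} {k : ℤ} (hk : |ν - k| ≤ 1 / 2) (n : ℤ) :
    |ν - k| ≤ |ν - n| := by
  rcases eq_or_ne n k with rfl | hnk
  · rfl
  · have hone : (1 : ℝ) ≤ |(n : ℝ) - k| := by
      exact_mod_cast Int.one_le_abs (sub_ne_zero.2 hnk)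
    have htriangle := abs_sub_le (n : ℝ) ν k
    rw [abs_sub_comm (n : ℝ) ν] at htriangle
    linarith

theorem hemisphere_first_AB_eigenvalue_general (ν : ℝ) (k : ℤ) (hk : |ν - k| ≤ 1 / 2) :
    sInf {q | ∃ u : ℝ → ℝ → ℂ, MagAdmissible (π / 2) ν u ∧ q = magQuot (π / 2) ν u} =
        |ν - k| * (|ν - k| + 1) ∧
      MagAdmissible (π / 2) ν (groundState k |ν - k|) ∧
      magQuot (π / 2) ν (groundState k |ν - k|) = |ν - k| * (|ν - k| + 1) := by
  have hadm : MagAdmissible (π / 2) ν (groundState k |ν - k|) := magAdmissible_groundState rfl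
  have hquot := magQuot_groundState (ν := ν) (k := k) rfl
  refine ⟨IsLeast.csInf_eq ⟨⟨_, hadm, hquot.symm⟩, ?_⟩, hadm, hquot⟩
  rintro _ ⟨u, hu, rfl⟩
  exact hu.mul_add_one_le_magQuot le_rfl (abs_nonneg _) (abs_sub_intCast_le_of_le_half hk)

/-- The first magnetic Neumann eigenvalue of the hemisphere `S²₊` (radius `r < π/2`)
with Aharonov–Bohm potential of flux `ν ∈ (0, 1/2]` and pole at its center equals
`ν(ν+1)`, attained by `u(r, θ) = (sin r)^ν`. -/
theorem hemisphere_first_AB_eigenvalue (ν : ℝ) (hν : ν ∈ Ioc (0:ℝ) (1/2)) :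
    sInf { q | ∃ u : ℝ → ℝ → ℂ, MagAdmissible (π/2) ν u ∧ q = magQuot (π/2) ν u }
        = ν * (ν + 1) ∧
    MagAdmissible (π/2) ν (fun r _ => ((Real.sin r ^ ν : ℝ) : ℂ)) ∧
    magQuot (π/2) ν (fun r _ => ((Real.sin r ^ ν : ℝ) : ℂ)) = ν * (ν + 1) := by
  simpa only [Int.cast_zero, sub_zero, abs_of_pos hν.1, groundState_zero] using
    hemisphere_first_AB_eigenvalue_general ν 0 (by simpa [abs_of_pos hν.1] using hν.2)
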